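/- arXiv:2004.03262 — 8 statements merged into one kernel-verified Lean document; each statement's English description precedes it below -/
import Mathlib

section
/- Let α and γ be finite index sets in which every index a carries a subsystem label sub(a) ∈ V and a time label τ(a) ∈ ℕ. If a real matrix Q (rows indexed by α, columns by γ) has the Q_C-sparsity pattern and a real square matrix Y (rows and columns indexed by γ) has the Y-sparsity pattern, then the product Q·Y has the Q_C-sparsity pattern; that is, (QY)(a,c) = 0 whenever τ(a) < τ(c) or sub(a) ∉ 𝒪(sub(c)). -/
/-- `Q` (rows indexed by `α`, columns by `γ`) has the Q_C-sparsity pattern: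
`Q a c = 0` whenever `τ a < τ c` or `sub a ∉ 𝒪 (sub c)`. -/
def QCPattern {V α γ : Type*} (𝒪 : V → Set V)
    (subα : α → V) (τα : α → ℕ) (subγ : γ → V) (τγ : γ → ℕ)
    (Q : Matrix α γ ℝ) : Prop :=
  ∀ a c, (τα a < τγ c ∨ subα a ∉ 𝒪 (subγ c)) → Q a c = 0

/-- A square matrix `Y` on `γ` has the Y-sparsity pattern:
`Y c c' = 0` whenever `τ c ≤ τ c'` or `𝒪 (sub c) ⊄ 𝒪 (sub c')`. -/
def YPattern {V γ : Type*} (𝒪 : V → Set V)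
    (subγ : γ → V) (τγ : γ → ℕ) (Y : Matrix γ γ ℝ) : Prop :=
  ∀ c c', (τγ c ≤ τγ c' ∨ ¬ 𝒪 (subγ c) ⊆ 𝒪 (subγ c')) → Y c c' = 0

theorem stmt0 {V α γ : Type*} [Fintype α] [Fintype γ]
    (𝒪 : V → Set V) (subα : α → V) (τα : α → ℕ) (subγ : γ → V) (τγ : γ → ℕ)
    (Q : Matrix α γ ℝ) (Y : Matrix γ γ ℝ)
    (hQ : QCPattern 𝒪 subα τα subγ τγ Q)
    (hY : YPattern 𝒪 subγ τγ Y) :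
    QCPattern 𝒪 subα τα subγ τγ (Q * Y) := by
  intro a c h
  rw [Matrix.mul_apply]
  refine Finset.sum_eq_zero fun d _ => ?_
  by_cases hd : τγ d ≤ τγ c ∨ ¬ 𝒪 (subγ d) ⊆ 𝒪 (subγ c)
  · rw [hY d c hd, mul_zero]
  -- Otherwise `τ c < τ d` and `𝒪 (sub d) ⊆ 𝒪 (sub c)`, so either cause of vanishing at `(a, c)`
  -- is inherited by `(a, d)`.
  · rw [not_or, not_le, not_not] at hd
    rw [hQ a d (h.imp (fun ht => ht.trans hd.1) (fun hs hm => hs (hd.2 hm))), zero_mul]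
end

section
/- Let γ be a finite index set in which every index c carries a subsystem label sub(c) ∈ V and a time label τ(c) ∈ ℕ. If real square matrices Y₁ and Y₂ (rows and columns indexed by γ) both have the Y-sparsity pattern, then their product Y₁·Y₂ also has the Y-sparsity pattern. -/
theorem stmt1 {V γ : Type*} [Fintype γ]
    (𝒪 : V → Set V) (subγ : γ → V) (τγ : γ → ℕ)
    (Y₁ Y₂ : Matrix γ γ ℝ)
    (h₁ : YPattern 𝒪 subγ τγ Y₁) (h₂ : YPattern 𝒪 subγ τγ Y₂) :
    YPattern 𝒪 subγ τγ (Y₁ * Y₂) := by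
  intro c c' h
  rw [Matrix.mul_apply]
  refine Finset.sum_eq_zero fun k _ => ?_
  -- A nonzero term makes `τγ` strictly decrease and `𝒪 ∘ subγ` weakly increase along both
  -- steps of the path through `k`, hence between its endpoints by transitivity.
  by_contra hne
  obtain ⟨h1, h2⟩ := mul_ne_zero_iff.mp hne
  have k1 := mt (h₁ c k) h1
  have k2 := mt (h₂ k c') h2
  push Not at k1 k2
  exact h.elim (fun ht => absurd (k2.1.trans k1.1) ht.not_gt)
    (fun hs => hs (k1.2.trans k2.2))
end

section
/- Let γ be a finite index set in which every index c carries a subsystem label sub(c) ∈ V and a time label τ(c) ∈ {0, 1, …, T}. Let Y be a real square matrix (rows and columns indexed by γ) with the Y-sparsity pattern and let λ ≥ 1 be a real scalar. Then the matrix λI − Y is invertible, and the matrix (λI − Y)⁻¹ − λ⁻¹I has the Y-sparsity pattern. -/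
theorem YPattern.of_pow_ne_zero {V γ : Type*} [Fintype γ] [DecidableEq γ]
    {𝒪 : V → Set V} {subγ : γ → V} {τγ : γ → ℕ} {Y : Matrix γ γ ℝ}
    (hY : YPattern 𝒪 subγ τγ Y) (k : ℕ) (c c' : γ) (h : (Y ^ k) c c' ≠ 0) :
    τγ c' + k ≤ τγ c ∧ 𝒪 (subγ c) ⊆ 𝒪 (subγ c') := by
  induction k generalizing c' with
  | zero =>
    have hc : c = c' := by
      by_contra hne
      exact h (by simp [Matrix.one_apply_ne hne])
    subst hc
    simp
  | succ k ih =>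
    rw [pow_succ, Matrix.mul_apply] at h
    obtain ⟨d, -, hd⟩ := Finset.exists_ne_zero_of_sum_ne_zero h
    obtain ⟨h1, h2⟩ := ih d (left_ne_zero_of_mul hd)
    have h3 := mt (hY d c') (right_ne_zero_of_mul hd)
    push Not at h3
    exact ⟨by omega, h2.trans h3.2⟩

theorem stmt2 {V γ : Type*} [Fintype γ] [DecidableEq γ]
    (𝒪 : V → Set V) (subγ : γ → V) (τγ : γ → ℕ) (T : ℕ)
    (hT : ∀ c, τγ c ≤ T)
    (Y : Matrix γ γ ℝ) (hY : YPattern 𝒪 subγ τγ Y)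
    (lam : ℝ) (hlam : 1 ≤ lam) :
    IsUnit (lam • (1 : Matrix γ γ ℝ) - Y) ∧
      YPattern 𝒪 subγ τγ ((lam • (1 : Matrix γ γ ℝ) - Y)⁻¹ - lam⁻¹ • (1 : Matrix γ γ ℝ)) := by
  have hl : lam ≠ 0 := by positivity
  have hnil : Y ^ (T + 1) = 0 := by
    ext c c'
    by_contra h
    have h1 := (hY.of_pow_ne_zero _ c c' h).1
    have h2 := hT c
    omega
  have hfac : lam • (1 : Matrix γ γ ℝ) - Y = lam • (1 - lam⁻¹ • Y) := by
    rw [smul_sub, smul_smul, mul_inv_cancel₀ hl, one_smul]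
  have hmul : (lam • (1 : Matrix γ γ ℝ) - Y) *
      (lam⁻¹ • ∑ i ∈ Finset.range (T + 1), (lam⁻¹ • Y) ^ i) = 1 := by
    rw [hfac, smul_mul_smul_comm, mul_inv_cancel₀ hl, one_smul, mul_neg_geom_sum, smul_pow, hnil,
      smul_zero, sub_zero]
  refine ⟨IsUnit.of_mul_eq_one _ hmul, ?_⟩
  rw [Matrix.inv_eq_right_inv hmul, Finset.sum_range_succ', pow_zero, smul_add, add_sub_cancel_right]
  intro c c' h
  rw [Matrix.smul_apply, Matrix.sum_apply, Finset.sum_eq_zero, smul_zero]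
  intro i _
  rw [smul_pow, Matrix.smul_apply]
  by_cases h0 : (Y ^ (i + 1)) c c' = 0
  · rw [h0, smul_zero]
  · obtain ⟨h1, h2⟩ := hY.of_pow_ne_zero _ c c' h0
    rcases h with h | h
    · omega
    · exact absurd h2 h
end

section
/- Let α and γ be finite index sets in which every index carries a subsystem label in V and a time label, with the time labels of γ taking values in {0, 1, …, T}. Let Y be a real square matrix on γ with the Y-sparsity pattern and let λ ≥ 1 be a real scalar. Then the set of matrices {Q·(λI − Y)⁻¹ : Q has the Q_C-sparsity pattern} equals the set {Q : Q has the Q_C-sparsity pattern}. -/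
/-- Entries of `Y ^ k` vanish unless the row is at least `k` time steps later than the column. -/
lemma YPattern.pow_apply_eq_zero {V γ : Type*} [Fintype γ] [DecidableEq γ] {𝒪 : V → Set V}
    {subγ : γ → V} {τγ : γ → ℕ} {Y : Matrix γ γ ℝ} (hY : YPattern 𝒪 subγ τγ Y) (k : ℕ) :
    ∀ c c', τγ c < τγ c' + k → (Y ^ k) c c' = 0 := by
  induction k with
  | zero =>
    intro c c' h
    rw [pow_zero, Matrix.one_apply_ne]
    rintro rfl
    simp at h
  | succ k ih =>
    intro c c' h
    rw [pow_succ, Matrix.mul_apply]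
    refine Finset.sum_eq_zero fun d _ => ?_
    by_cases hd : τγ d ≤ τγ c'
    · rw [hY d c' (Or.inl hd), mul_zero]
    · rw [ih c d (by omega), zero_mul]

lemma YPattern.isNilpotent {V γ : Type*} [Fintype γ] [DecidableEq γ] {𝒪 : V → Set V}
    {subγ : γ → V} {τγ : γ → ℕ} {Y : Matrix γ γ ℝ} (hY : YPattern 𝒪 subγ τγ Y)
    {T : ℕ} (hT : ∀ c, τγ c ≤ T) : IsNilpotent Y := by
  refine ⟨T + 1, ?_⟩
  ext c c'
  exact hY.pow_apply_eq_zero (T + 1) c c' (by have := hT c; omega)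

lemma YPattern.isUnit_det {V γ : Type*} [Fintype γ] [DecidableEq γ] {𝒪 : V → Set V}
    {subγ : γ → V} {τγ : γ → ℕ} {Y : Matrix γ γ ℝ} (hY : YPattern 𝒪 subγ τγ Y)
    {T : ℕ} (hT : ∀ c, τγ c ≤ T) {lam : ℝ} (hlam : lam ≠ 0) :
    IsUnit (lam • (1 : Matrix γ γ ℝ) - Y).det := by
  rw [← Matrix.isUnit_iff_isUnit_det, sub_eq_add_neg]
  refine (hY.isNilpotent hT).neg.isUnit_add_left_of_commute ?_
    ((Commute.one_right _).smul_right lam)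
  exact (Units.mk0 lam hlam • (1 : (Matrix γ γ ℝ)ˣ)).isUnit

lemma mul_smul_one_sub_apply {α γ : Type*} [Fintype γ] [DecidableEq γ]
    (P : Matrix α γ ℝ) (Y : Matrix γ γ ℝ) (lam : ℝ) (a : α) (c' : γ) :
    (P * (lam • (1 : Matrix γ γ ℝ) - Y)) a c' = lam * P a c' - ∑ c, P a c * Y c c' := by
  rw [Matrix.mul_sub, Matrix.mul_smul, Matrix.mul_one, Matrix.sub_apply, Matrix.smul_apply,
    smul_eq_mul, Matrix.mul_apply]

/-- At an entry `(a, c')` forbidden by the `Q_C`-pattern, `(P * Y) a c'` vanishes as soon as `P`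
vanishes at the forbidden entries `(a, c)` with `c` strictly later than `c'`. -/
lemma YPattern.sum_eq_zero {V α γ : Type*} [Fintype γ] {𝒪 : V → Set V}
    {subα : α → V} {τα : α → ℕ} {subγ : γ → V} {τγ : γ → ℕ}
    {Y : Matrix γ γ ℝ} (hY : YPattern 𝒪 subγ τγ Y) {P : Matrix α γ ℝ} {a : α} {c' : γ}
    (h : τα a < τγ c' ∨ subα a ∉ 𝒪 (subγ c'))
    (hP : ∀ c, τγ c' < τγ c → (τα a < τγ c ∨ subα a ∉ 𝒪 (subγ c)) → P a c = 0) :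
    ∑ c, P a c * Y c c' = 0 := by
  refine Finset.sum_eq_zero fun c _ => ?_
  by_cases hc : τγ c ≤ τγ c' ∨ ¬ 𝒪 (subγ c) ⊆ 𝒪 (subγ c')
  · rw [hY c c' hc, mul_zero]
  · push Not at hc
    rw [hP c hc.1 (h.imp (fun h => h.trans hc.1) fun h h' => h (hc.2 h')), zero_mul]

lemma QCPattern.mul_smul_one_sub {V α γ : Type*} [Fintype γ] [DecidableEq γ] {𝒪 : V → Set V}
    {subα : α → V} {τα : α → ℕ} {subγ : γ → V} {τγ : γ → ℕ}
    {Y : Matrix γ γ ℝ} (hY : YPattern 𝒪 subγ τγ Y) (lam : ℝ) {P : Matrix α γ ℝ}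
    (hP : QCPattern 𝒪 subα τα subγ τγ P) :
    QCPattern 𝒪 subα τα subγ τγ (P * (lam • (1 : Matrix γ γ ℝ) - Y)) := by
  intro a c' h
  rw [mul_smul_one_sub_apply, hP a c' h, hY.sum_eq_zero h fun c _ hc => hP a c hc]
  simp

/-- If `P * (lam • 1 - Y)` has the `Q_C`-pattern then so does `P`, by downward induction on
the time of the column. -/
lemma QCPattern.of_mul_smul_one_sub {V α γ : Type*} [Fintype γ] [DecidableEq γ]
    {𝒪 : V → Set V} {subα : α → V} {τα : α → ℕ} {subγ : γ → V} {τγ : γ → ℕ}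
    {T : ℕ} (hT : ∀ c, τγ c ≤ T)
    {Y : Matrix γ γ ℝ} (hY : YPattern 𝒪 subγ τγ Y) {lam : ℝ} (hlam : lam ≠ 0)
    {P : Matrix α γ ℝ}
    (hP : QCPattern 𝒪 subα τα subγ τγ (P * (lam • (1 : Matrix γ γ ℝ) - Y))) :
    QCPattern 𝒪 subα τα subγ τγ P := by
  intro a c'
  induction hn : T - τγ c' using Nat.strong_induction_on generalizing c' with
  | _ n ih =>
    intro h
    have key := hP a c' h
    rw [mul_smul_one_sub_apply, hY.sum_eq_zero h fun c hc hc' =>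
      ih (T - τγ c) (by have := hT c; omega) c rfl hc', sub_zero] at key
    exact (mul_eq_zero.mp key).resolve_left hlam

theorem stmt3 {V α γ : Type*} [Fintype α] [Fintype γ] [DecidableEq γ]
    (𝒪 : V → Set V) (subα : α → V) (τα : α → ℕ) (subγ : γ → V) (τγ : γ → ℕ)
    (T : ℕ) (hT : ∀ c, τγ c ≤ T)
    (Y : Matrix γ γ ℝ) (hY : YPattern 𝒪 subγ τγ Y)
    (lam : ℝ) (hlam : 1 ≤ lam) :
    (fun Q : Matrix α γ ℝ => Q * (lam • (1 : Matrix γ γ ℝ) - Y)⁻¹) ''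
        {Q | QCPattern 𝒪 subα τα subγ τγ Q} =
      {Q | QCPattern 𝒪 subα τα subγ τγ Q} := by
  have hlam0 : lam ≠ 0 := by linarith
  have hdet := hY.isUnit_det hT hlam0
  ext P
  constructor
  · rintro ⟨Q, hQ, rfl⟩
    refine QCPattern.of_mul_smul_one_sub hT hY hlam0 ?_
    rw [Matrix.nonsing_inv_mul_cancel_right _ _ hdet]
    exact hQ
  · intro hP
    exact ⟨P * (lam • 1 - Y), QCPattern.mul_smul_one_sub hY lam hP,
      Matrix.mul_nonsing_inv_cancel_right _ _ hdet⟩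
end

section
/- For every vector c ∈ ℝⁿ, the real number √(cᵀΣc) is the greatest element (IsGreatest) of the set {cᵀz : z ∈ 𝒲}; i.e., cᵀz ≤ √(cᵀΣc) for all z ∈ 𝒲 and this bound is attained by some z ∈ 𝒲. -/
/-!
Write `q = cᵀΣc`. For `z` in the ellipsoid put `p = cᵀz`; expanding the nonnegative quantity
`(c - p Σ⁻¹z)ᵀ Σ (c - p Σ⁻¹z) = q - 2p² + p² zᵀΣ⁻¹z` and using `zᵀΣ⁻¹z ≤ 1` gives `p² ≤ q`.
The bound is attained at `z = (√q)⁻¹ Σc`.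
-/

open Matrix

theorem stmt5 {n : ℕ} (Sig : Matrix (Fin n) (Fin n) ℝ) (hSig : Sig.PosDef)
    (c : Fin n → ℝ) :
    IsGreatest ((fun z => c ⬝ᵥ z) '' {z : Fin n → ℝ | z ⬝ᵥ (Sig⁻¹ *ᵥ z) ≤ 1})
      (Real.sqrt (c ⬝ᵥ (Sig *ᵥ c))) := by
  have hdet : IsUnit Sig.det := hSig.det_pos.ne'.isUnit
  have hnn : ∀ u : Fin n → ℝ, 0 ≤ u ⬝ᵥ (Sig *ᵥ u) := fun u => by
    simpa using hSig.posSemidef.dotProduct_mulVec_nonneg u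
  have hT : Sigᵀ = Sig := by
    simpa [conjTranspose_eq_transpose_of_trivial] using hSig.isHermitian.eq
  have hsymm : ∀ u v : Fin n → ℝ, u ⬝ᵥ (Sig *ᵥ v) = (Sig *ᵥ u) ⬝ᵥ v := fun u v => by
    rw [dotProduct_mulVec, ← mulVec_transpose, hT]
  refine ⟨⟨(Real.sqrt (c ⬝ᵥ (Sig *ᵥ c)))⁻¹ • (Sig *ᵥ c), ?_, ?_⟩, ?_⟩
  · have hinv : Sig⁻¹ *ᵥ (Sig *ᵥ c) = c := by
      rw [mulVec_mulVec, nonsing_inv_mul _ hdet, one_mulVec]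
    have hs := Real.mul_self_sqrt (hnn c)
    simp only [Set.mem_setOf_eq, mulVec_smul, hinv, smul_dotProduct, dotProduct_smul,
      smul_eq_mul, ← hsymm]
    set s := Real.sqrt (c ⬝ᵥ (Sig *ᵥ c))
    rw [← hs]
    -- If `s = 0`, then `s⁻¹ = 0` and the point is the origin.
    by_cases h0 : s = 0
    · simp [h0]
    · field_simp
      exact le_rfl
  · have hs := Real.mul_self_sqrt (hnn c)
    simp only [dotProduct_smul, smul_eq_mul]
    set s := Real.sqrt (c ⬝ᵥ (Sig *ᵥ c))
    rw [← hs]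
    by_cases h0 : s = 0
    · simp [h0]
    · field_simp
  · rintro _ ⟨z, hz, rfl⟩
    simp only [Set.mem_setOf_eq] at hz
    have hinv : Sig *ᵥ (Sig⁻¹ *ᵥ z) = z := by
      rw [mulVec_mulVec, mul_nonsing_inv _ hdet, one_mulVec]
    have h := hnn (c - (c ⬝ᵥ z) • (Sig⁻¹ *ᵥ z))
    have hcross : (Sig⁻¹ *ᵥ z) ⬝ᵥ (Sig *ᵥ c) = c ⬝ᵥ z := by
      rw [hsymm, hinv, dotProduct_comm]
    have hself : (Sig⁻¹ *ᵥ z) ⬝ᵥ z = z ⬝ᵥ (Sig⁻¹ *ᵥ z) := dotProduct_comm _ _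
    simp only [mulVec_sub, mulVec_smul, hinv, sub_dotProduct, dotProduct_sub, smul_dotProduct,
      dotProduct_smul, smul_eq_mul, hcross, hself] at h
    apply Real.le_sqrt_of_sq_le
    nlinarith [mul_le_mul_of_nonneg_left hz (sq_nonneg (c ⬝ᵥ z))]
end

section
/- Let M₁, M₂ be real m×n matrices and b ∈ ℝᵐ. Then the semi-infinite constraint that (M₁w + M₂ξ)ᵢ ≤ bᵢ for every i = 1,…,m and every pair (w, ξ) ∈ 𝒲 × 𝒲 holds if and only if for every i = 1,…,m, √(rᵢᵀΣrᵢ) + √(sᵢᵀΣsᵢ) ≤ bᵢ, where rᵢ and sᵢ denote the i-th rows of M₁ and M₂ (as column vectors), respectively. -/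
/-!
The rows decouple, and for a fixed row the suprema over `w` and `ξ` are independent. The theorem
therefore reduces to computing the support function of the ellipsoid `{z | zᵀ Σ⁻¹ z ≤ 1}`:
it is `r ↦ √(rᵀ Σ r)`. The bound (`dotProduct_le_sqrt_of_mem_ellipsoid`) is Cauchy-Schwarz for the
quadratic form of `Σ⁻¹` applied to `z` and `Σ r`, and it is attained at `Σ r / √(rᵀ Σ r)`
(`exists_mem_ellipsoid_dotProduct_eq_sqrt`).
-/

open Matrix

lemma inv_mulVec_mulVec_of_posDef {n : ℕ} {S : Matrix (Fin n) (Fin n) ℝ} (hS : S.PosDef)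
    (r : Fin n → ℝ) : S⁻¹ *ᵥ (S *ᵥ r) = r := by
  rw [mulVec_mulVec, nonsing_inv_mul _ ((isUnit_iff_isUnit_det S).1 hS.isUnit), one_mulVec]

lemma dotProduct_le_sqrt_of_mem_ellipsoid {n : ℕ} {S : Matrix (Fin n) (Fin n) ℝ} (hS : S.PosDef)
    (r : Fin n → ℝ) {z : Fin n → ℝ} (hz : z ⬝ᵥ (S⁻¹ *ᵥ z) ≤ 1) :
    r ⬝ᵥ z ≤ Real.sqrt (r ⬝ᵥ (S *ᵥ r)) := by
  have hsymm : (S *ᵥ r) ⬝ᵥ (S⁻¹ *ᵥ z) = r ⬝ᵥ z := by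
    have ht : (S⁻¹)ᵀ = S⁻¹ := by
      have h := hS.inv.isHermitian.eq
      rwa [conjTranspose_eq_transpose_of_trivial] at h
    rw [dotProduct_mulVec, ← mulVec_transpose, ht, inv_mulVec_mulVec_of_posDef hS]
  -- The form of `Σ⁻¹` at `z - a • Σ r` is a nonnegative quadratic polynomial in `a`, so its
  -- discriminant is nonpositive.
  have hquad : ∀ a : ℝ, 0 ≤ (r ⬝ᵥ (S *ᵥ r)) * (a * a) + (-2 * (r ⬝ᵥ z)) * a
      + z ⬝ᵥ (S⁻¹ *ᵥ z) := by
    intro a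
    have h := hS.inv.posSemidef.dotProduct_mulVec_nonneg (z - a • (S *ᵥ r))
    simp only [star_trivial, mulVec_sub, mulVec_smul, inv_mulVec_mulVec_of_posDef hS,
      sub_dotProduct, dotProduct_sub, smul_dotProduct, dotProduct_smul, smul_eq_mul, hsymm] at h
    rw [dotProduct_comm z r, dotProduct_comm (S *ᵥ r) r] at h
    linarith
  have hd := discrim_le_zero hquad
  have hq : 0 ≤ r ⬝ᵥ (S *ᵥ r) := by
    simpa using hS.posSemidef.dotProduct_mulVec_nonneg r
  apply Real.le_sqrt_of_sq_le
  rw [discrim] at hd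
  nlinarith [mul_le_mul_of_nonneg_left hz hq]

lemma exists_mem_ellipsoid_dotProduct_eq_sqrt {n : ℕ} {S : Matrix (Fin n) (Fin n) ℝ}
    (hS : S.PosDef) (r : Fin n → ℝ) :
    ∃ z : Fin n → ℝ, z ⬝ᵥ (S⁻¹ *ᵥ z) ≤ 1 ∧ r ⬝ᵥ z = Real.sqrt (r ⬝ᵥ (S *ᵥ r)) := by
  have hq : 0 ≤ r ⬝ᵥ (S *ᵥ r) := by
    simpa using hS.posSemidef.dotProduct_mulVec_nonneg r
  -- When `r = 0` the convention `0⁻¹ = 0` makes this witness `0`, which is still correct.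
  refine ⟨(Real.sqrt (r ⬝ᵥ (S *ᵥ r)))⁻¹ • (S *ᵥ r), ?_, ?_⟩
  · rw [mulVec_smul, inv_mulVec_mulVec_of_posDef hS, smul_dotProduct, dotProduct_smul,
      smul_eq_mul, smul_eq_mul, ← mul_assoc, ← mul_inv, Real.mul_self_sqrt hq,
      dotProduct_comm (S *ᵥ r) r]
    exact inv_mul_le_one
  · rw [dotProduct_smul, smul_eq_mul, mul_comm, ← div_eq_mul_inv, Real.div_sqrt]

theorem stmt6 {n m : ℕ} (Sig : Matrix (Fin n) (Fin n) ℝ) (hSig : Sig.PosDef)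
    (M₁ M₂ : Matrix (Fin m) (Fin n) ℝ) (b : Fin m → ℝ) :
    (∀ w ξ : Fin n → ℝ, w ⬝ᵥ (Sig⁻¹ *ᵥ w) ≤ 1 → ξ ⬝ᵥ (Sig⁻¹ *ᵥ ξ) ≤ 1 →
        ∀ i, (M₁ *ᵥ w + M₂ *ᵥ ξ) i ≤ b i) ↔
      (∀ i, Real.sqrt (M₁ i ⬝ᵥ (Sig *ᵥ M₁ i)) + Real.sqrt (M₂ i ⬝ᵥ (Sig *ᵥ M₂ i)) ≤ b i) := by
  constructor
  · intro h i
    obtain ⟨w, hw, hw'⟩ := exists_mem_ellipsoid_dotProduct_eq_sqrt hSig (M₁ i)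
    obtain ⟨ξ, hξ, hξ'⟩ := exists_mem_ellipsoid_dotProduct_eq_sqrt hSig (M₂ i)
    rw [← hw', ← hξ']
    exact h w ξ hw hξ i
  · intro h w ξ hw hξ i
    exact (add_le_add (dotProduct_le_sqrt_of_mem_ellipsoid hSig (M₁ i) hw)
      (dotProduct_le_sqrt_of_mem_ellipsoid hSig (M₂ i) hξ)).trans (h i)
end

section
/- Let 𝒲 ⊆ ℝ^{Nx} be any set of disturbance trajectories and let 𝒱 ⊆ ℝ^{Nc} be a nonempty set (the contract set). Suppose the matrix K := Π(B̃Qᵛ + H̃) is nilpotent, and suppose the assume-guarantee contract holds: for every w ∈ 𝒲 and every v ∈ 𝒱, Π(B̃(ū + Qʷw + Qᵛv) + L̃w + H̃v) ∈ 𝒱. Then for every w ∈ 𝒲, every x ∈ ℝ^{Nx} satisfying the closed-loop equation x = B(ū + Qʷw + QᵛΠx) + Lw satisfies Πx ∈ 𝒱. -/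
/-!
Along a closed-loop trajectory `x` the coupling signal `v = Pi *ᵥ x` is a fixed point of the
guarantee map `F v = Pi *ᵥ (Bt *ᵥ (ubar + Qw *ᵥ w + Qv *ᵥ v) + Lt *ᵥ w + Ht *ᵥ v)`, by the
relations defining `B` and `L`. This map is affine with nilpotent linear part
`K = Pi * (Bt * Qv + Ht)`, so `F^[n] v₀ - v = K ^ n *ᵥ (v₀ - v)` vanishes for large `n`: iterating
from any `v₀ ∈ 𝒱` reaches `v` in finitely many steps, and the contract keeps every iterate in `𝒱`.
-/

open Matrix

theorem stmt9 {Nx Nu Nc : ℕ}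
    (Bt : Matrix (Fin Nx) (Fin Nu) ℝ) (Lt : Matrix (Fin Nx) (Fin Nx) ℝ)
    (Ht : Matrix (Fin Nx) (Fin Nc) ℝ) (Pi : Matrix (Fin Nc) (Fin Nx) ℝ)
    (B : Matrix (Fin Nx) (Fin Nu) ℝ) (L : Matrix (Fin Nx) (Fin Nx) ℝ)
    (hB : B = Bt + Ht * Pi * B) (hL : L = Lt + Ht * Pi * L)
    (ubar : Fin Nu → ℝ) (Qw : Matrix (Fin Nu) (Fin Nx) ℝ)
    (Qv : Matrix (Fin Nu) (Fin Nc) ℝ)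
    (𝒲 : Set (Fin Nx → ℝ)) (𝒱 : Set (Fin Nc → ℝ)) (h𝒱 : 𝒱.Nonempty)
    (hnil : IsNilpotent (Pi * (Bt * Qv + Ht)))
    (hcontract : ∀ w ∈ 𝒲, ∀ v ∈ 𝒱,
      Pi *ᵥ (Bt *ᵥ (ubar + Qw *ᵥ w + Qv *ᵥ v) + Lt *ᵥ w + Ht *ᵥ v) ∈ 𝒱) :
    ∀ w ∈ 𝒲, ∀ x : Fin Nx → ℝ,
      x = B *ᵥ (ubar + Qw *ᵥ w + Qv *ᵥ (Pi *ᵥ x)) + L *ᵥ w →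
      Pi *ᵥ x ∈ 𝒱 := by
  intro w hw x hx
  obtain ⟨v₀, hv₀⟩ := h𝒱
  obtain ⟨n, hn⟩ := hnil
  -- The closed-loop trajectory also solves the surrogate dynamics driven by its own coupling signal.
  have hx' : x = Bt *ᵥ (ubar + Qw *ᵥ w + Qv *ᵥ (Pi *ᵥ x)) + Lt *ᵥ w + Ht *ᵥ (Pi *ᵥ x) := by
    generalize hu : ubar + Qw *ᵥ w + Qv *ᵥ (Pi *ᵥ x) = u at hx ⊢
    have h1 : B *ᵥ u = Bt *ᵥ u + Ht *ᵥ (Pi *ᵥ (B *ᵥ u)) := by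
      conv_lhs => rw [hB]
      simp only [add_mulVec, mulVec_mulVec, Matrix.mul_assoc]
    have h2 : L *ᵥ w = Lt *ᵥ w + Ht *ᵥ (Pi *ᵥ (L *ᵥ w)) := by
      conv_lhs => rw [hL]
      simp only [add_mulVec, mulVec_mulVec, Matrix.mul_assoc]
    have h3 : Ht *ᵥ (Pi *ᵥ x) = Ht *ᵥ (Pi *ᵥ (B *ᵥ u)) + Ht *ᵥ (Pi *ᵥ (L *ᵥ w)) := by
      rw [← mulVec_add, ← mulVec_add, ← hx]
    rw [h3]
    calc x = B *ᵥ u + L *ᵥ w := hx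
      _ = (Bt *ᵥ u + Ht *ᵥ (Pi *ᵥ (B *ᵥ u))) + (Lt *ᵥ w + Ht *ᵥ (Pi *ᵥ (L *ᵥ w))) := by
        rw [← h1, ← h2]
      _ = _ := by abel
  have key : ∀ m : ℕ, ∃ y ∈ 𝒱,
      y - Pi *ᵥ x = ((Pi * (Bt * Qv + Ht)) ^ m) *ᵥ (v₀ - Pi *ᵥ x) := by
    intro m
    induction m with
    | zero => exact ⟨v₀, hv₀, by simp⟩
    | succ m ih =>
      obtain ⟨y, hy, hym⟩ := ih
      refine ⟨_, hcontract w hw y hy, ?_⟩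
      rw [pow_succ', ← mulVec_mulVec, ← hym]
      conv_lhs => arg 2; rw [hx']
      simp only [← mulVec_mulVec, add_mulVec, mulVec_add, mulVec_sub]
      abel
  obtain ⟨y, hy, hyn⟩ := key n
  rw [hn, zero_mulVec, sub_eq_zero] at hyn
  exact hyn ▸ hy
end

section
/- Let 𝒲 ⊆ ℝ^{Nx} and let 𝒱 ⊆ ℝ^{Nc} be nonempty. Suppose K := Π(B̃Qᵛ + H̃) is nilpotent and the assume-guarantee contract holds: for every w ∈ 𝒲 and v ∈ 𝒱, Π(B̃(ū + Qʷw + Qᵛv) + L̃w + H̃v) ∈ 𝒱. Suppose in addition that for every w ∈ 𝒲 and v ∈ 𝒱 the surrogate constraint F_x x̃ + F_u ũ + F_w w ≤ g holds componentwise, where ũ := ū + Qʷw + Qᵛv and x̃ := B̃ũ + L̃w + H̃v. Then for every w ∈ 𝒲 and every x ∈ ℝ^{Nx} satisfying the closed-loop equation x = B(ū + Qʷw + QᵛΠx) + Lw, the actual constraint F_x x + F_u u + F_w w ≤ g holds componentwise, where u := ū + Qʷw + QᵛΠx. -/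
/-!
Write `B̃, L̃, H̃, Π` for `Bt, Lt, Ht, Pi`, and `u = ubar + Qw w + Qv Π x`. Since
`B = B̃ + H̃ Π B` and `L = L̃ + H̃ Π L`, a closed-loop
trajectory `x = B u + L w` satisfies `x = B̃ u + L̃ w + H̃ Π x`: it is the surrogate trajectory driven
by `v = Π x`. So the surrogate constraint yields the actual one as soon as `Π x ∈ 𝒱`.

Now `Π x` is a fixed point of the affine map `T v = Π (B̃ (ubar + Qw w + Qv v) + L̃ w + H̃ v)`, which
maps `𝒱` into itself by the contract and has linear part `K = Π (B̃ Qv + H̃)`. Starting from any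
`v₀ ∈ 𝒱`, one has `Tⁿ v₀ - Π x = Kⁿ (v₀ - Π x)`, which vanishes for large `n` because `K` is
nilpotent; hence `Π x = Tⁿ v₀ ∈ 𝒱`.
-/

open Matrix

/-- A set invariant under a map `T` with nilpotent linear part `K` about a fixed point `p` contains
`p` as soon as it is nonempty. -/
theorem fixedPoint_mem_of_isNilpotent {n : ℕ} {K : Matrix (Fin n) (Fin n) ℝ} (hK : IsNilpotent K)
    {T : (Fin n → ℝ) → Fin n → ℝ} {p : Fin n → ℝ} (hT : ∀ v, T v - p = K *ᵥ (v - p))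
    {V : Set (Fin n → ℝ)} (hne : V.Nonempty) (hV : ∀ v ∈ V, T v ∈ V) : p ∈ V := by
  obtain ⟨v₀, hv₀⟩ := hne
  obtain ⟨k, hk⟩ := hK
  have key : ∀ j : ℕ, ∃ v ∈ V, v - p = (K ^ j) *ᵥ (v₀ - p) := by
    intro j
    induction j with
    | zero => exact ⟨v₀, hv₀, by simp⟩
    | succ j ih =>
      obtain ⟨v, hv, h⟩ := ih
      exact ⟨T v, hV v hv, by rw [hT, h, Matrix.mulVec_mulVec, pow_succ']⟩
  obtain ⟨v, hv, h⟩ := key k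
  rw [hk, Matrix.zero_mulVec, sub_eq_zero] at h
  exact h ▸ hv

theorem stmt10 {Nx Nu Nc m : ℕ}
    (Bt : Matrix (Fin Nx) (Fin Nu) ℝ) (Lt : Matrix (Fin Nx) (Fin Nx) ℝ)
    (Ht : Matrix (Fin Nx) (Fin Nc) ℝ) (Pi : Matrix (Fin Nc) (Fin Nx) ℝ)
    (B : Matrix (Fin Nx) (Fin Nu) ℝ) (L : Matrix (Fin Nx) (Fin Nx) ℝ)
    (hB : B = Bt + Ht * Pi * B) (hL : L = Lt + Ht * Pi * L)
    (ubar : Fin Nu → ℝ) (Qw : Matrix (Fin Nu) (Fin Nx) ℝ)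
    (Qv : Matrix (Fin Nu) (Fin Nc) ℝ)
    (Fx : Matrix (Fin m) (Fin Nx) ℝ) (Fu : Matrix (Fin m) (Fin Nu) ℝ)
    (Fw : Matrix (Fin m) (Fin Nx) ℝ) (g : Fin m → ℝ)
    (𝒲 : Set (Fin Nx → ℝ)) (𝒱 : Set (Fin Nc → ℝ)) (h𝒱 : 𝒱.Nonempty)
    (hnil : IsNilpotent (Pi * (Bt * Qv + Ht)))
    (hcontract : ∀ w ∈ 𝒲, ∀ v ∈ 𝒱,
      Pi *ᵥ (Bt *ᵥ (ubar + Qw *ᵥ w + Qv *ᵥ v) + Lt *ᵥ w + Ht *ᵥ v) ∈ 𝒱)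
    (hsurr : ∀ w ∈ 𝒲, ∀ v ∈ 𝒱, ∀ i,
      (Fx *ᵥ (Bt *ᵥ (ubar + Qw *ᵥ w + Qv *ᵥ v) + Lt *ᵥ w + Ht *ᵥ v)
        + Fu *ᵥ (ubar + Qw *ᵥ w + Qv *ᵥ v) + Fw *ᵥ w) i ≤ g i) :
    ∀ w ∈ 𝒲, ∀ x : Fin Nx → ℝ,
      x = B *ᵥ (ubar + Qw *ᵥ w + Qv *ᵥ (Pi *ᵥ x)) + L *ᵥ w →
      ∀ i, (Fx *ᵥ x + Fu *ᵥ (ubar + Qw *ᵥ w + Qv *ᵥ (Pi *ᵥ x)) + Fw *ᵥ w) i ≤ g i := by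
  intro w hw x hx
  -- `x` is the surrogate trajectory driven by `v = Π x`.
  have hsx : Bt *ᵥ (ubar + Qw *ᵥ w + Qv *ᵥ (Pi *ᵥ x)) + Lt *ᵥ w + Ht *ᵥ (Pi *ᵥ x) = x := by
    generalize ubar + Qw *ᵥ w + Qv *ᵥ (Pi *ᵥ x) = u at hx ⊢
    have hBu : B *ᵥ u = Bt *ᵥ u + Ht *ᵥ (Pi *ᵥ (B *ᵥ u)) := by
      conv_lhs => rw [hB]
      simp only [Matrix.add_mulVec, Matrix.mulVec_mulVec, Matrix.mul_assoc]
    have hLw : L *ᵥ w = Lt *ᵥ w + Ht *ᵥ (Pi *ᵥ (L *ᵥ w)) := by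
      conv_lhs => rw [hL]
      simp only [Matrix.add_mulVec, Matrix.mulVec_mulVec, Matrix.mul_assoc]
    have hHx : Ht *ᵥ (Pi *ᵥ x) = Ht *ᵥ (Pi *ᵥ (B *ᵥ u)) + Ht *ᵥ (Pi *ᵥ (L *ᵥ w)) := by
      rw [hx, Matrix.mulVec_add, Matrix.mulVec_add]
    rw [hHx]
    conv_rhs => rw [hx, hBu, hLw]
    abel
  have hmem : Pi *ᵥ x ∈ 𝒱 := by
    refine fixedPoint_mem_of_isNilpotent hnil (fun v => ?_) h𝒱 (hcontract w hw)
    have hfix := congrArg (Pi *ᵥ ·) hsx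
    -- Rewrite only the subtracted `Π x` as `T (Π x)`, so that the constant part of `T` cancels.
    generalize Pi *ᵥ x = p at hfix ⊢
    conv_lhs => rw [← hfix]
    simp only [Matrix.mulVec_add, Matrix.mulVec_sub, Matrix.add_mulVec, Matrix.mul_add,
      ← Matrix.mulVec_mulVec]
    abel
  intro i
  have h := hsurr w hw _ hmem i
  rwa [hsx] at h
end
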